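/- Every Frobenius complement has non-trivial center. In particular, if H is a Frobenius complement of even order, then H contains a unique involution, which is central in H. -/

import Mathlib

open Matrix in
theorem frob_trace_pi {n : ℕ} (d : Fin n → ℕ)
    (x : Π i, Matrix (Fin (d i)) (Fin (d i)) ℂ) :
    LinearMap.trace ℂ _ (LinearMap.mulLeft ℂ x) = ∑ i, (d i : ℂ) * trace (x i) := by
  classical
  let b := Pi.basis (fun i => Matrix.stdBasis ℂ (Fin (d i)) (Fin (d i)))
  rw [LinearMap.trace_eq_matrix_trace ℂ b, Matrix.trace, Fintype.sum_sigma]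
  refine Finset.sum_congr rfl fun i _ => ?_
  rw [Fintype.sum_prod_type]
  have : ∀ (p q : Fin (d i)), (LinearMap.toMatrix b b (LinearMap.mulLeft ℂ x)).diag ⟨i, (p, q)⟩
      = x i p p := by
    intro p q
    rw [Matrix.diag_apply, LinearMap.toMatrix_apply]
    simp only [b, Pi.basis_apply, Matrix.stdBasis_eq_single, Pi.basis_repr, LinearMap.mulLeft_apply,
      Pi.mul_apply, Pi.single_eq_same]
    have h : ∀ y : Matrix (Fin (d i)) (Fin (d i)) ℂ,
        (Matrix.stdBasis ℂ (Fin (d i)) (Fin (d i))).repr y (p, q) = y p q := fun _ => rfl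
    rw [h]
    simp
  simp only [this]
  simp [Matrix.trace, Finset.mul_sum]

open MonoidAlgebra in
theorem frob_trace_reg (G : Type*) [Group G] [Fintype G] (x : MonoidAlgebra ℂ G) :
    LinearMap.trace ℂ _ (LinearMap.mulLeft ℂ x) = (Fintype.card G : ℂ) * x.coeff 1 := by
  classical
  let b := MonoidAlgebra.basis G ℂ
  rw [LinearMap.trace_eq_matrix_trace ℂ b, Matrix.trace]
  have : ∀ g, (LinearMap.toMatrix b b (LinearMap.mulLeft ℂ x)).diag g = x.coeff 1 := by
    intro g
    rw [Matrix.diag_apply, LinearMap.toMatrix_apply]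
    have h1 : b g = single g 1 := rfl
    have h2 : ∀ y, b.repr y = y.coeff := fun _ => rfl
    rw [h1, h2, LinearMap.mulLeft_apply]
    simp
  rw [Finset.sum_congr rfl fun g _ => this g]
  simp

open Matrix in
theorem frob_wedd (G : Type*) [Group G] [Fintype G] :
    ∃ (n : ℕ) (d : Fin n → ℕ) (ρ : ∀ i, G →* Matrix (Fin (d i)) (Fin (d i)) ℂ),
      (∀ i, 0 < d i) ∧
      (∀ f : G → ℂ, (∀ x g, f (x * g * x⁻¹) = f g) → ∀ g,
        (Fintype.card G : ℂ) * f g = ∑ i, (∑ a, f a⁻¹ * trace (ρ i a)) * trace (ρ i g)) ∧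
      (∀ i j g, (d j : ℂ) * ∑ a, trace (ρ j a⁻¹) * trace (ρ i (a * g)) =
        if i = j then (Fintype.card G : ℂ) * trace (ρ i g) else 0) := by
  classical
  have : NeZero (Nat.card G : ℂ) := ⟨by exact_mod_cast Nat.card_pos.ne'⟩
  have : FiniteDimensional ℂ (MonoidAlgebra ℂ G) :=
    Module.Basis.finiteDimensional_of_finite (MonoidAlgebra.basis G ℂ)
  obtain ⟨n, d, hd, ⟨E⟩⟩ :=
    IsSemisimpleRing.exists_algEquiv_pi_matrix_of_isAlgClosed ℂ (MonoidAlgebra ℂ G)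
  let ρ : ∀ i, G →* Matrix (Fin (d i)) (Fin (d i)) ℂ := fun i =>
    ((Pi.evalMonoidHom (fun i => Matrix (Fin (d i)) (Fin (d i)) ℂ) i).comp
      (E : MonoidAlgebra ℂ G →* Π i, Matrix (Fin (d i)) (Fin (d i)) ℂ)).comp (MonoidAlgebra.of ℂ G)
  have hρ : ∀ i g, ρ i g = E (MonoidAlgebra.single g 1) i := fun i g => rfl
  have hcoef : ∀ x : MonoidAlgebra ℂ G, (Fintype.card G : ℂ) * x.coeff 1 =
      ∑ i, (d i : ℂ) * trace (E x i) := by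
    intro x
    rw [← frob_trace_reg, ← frob_trace_pi, ← LinearMap.trace_conj' _ E.toLinearEquiv]
    congr 1
    apply LinearMap.ext
    intro y
    simp [LinearEquiv.conj_apply]
  have hcoefg : ∀ (x : MonoidAlgebra ℂ G) g, (Fintype.card G : ℂ) * x.coeff g =
      ∑ i, (d i : ℂ) * trace (E x i * ρ i g⁻¹) := by
    intro x g
    have := hcoef (x * MonoidAlgebra.single g⁻¹ 1)
    simpa [hρ] using this
  have hsum : ∀ (x : MonoidAlgebra ℂ G) i, E x i = ∑ g, x.coeff g • ρ i g := by
    intro x i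
    have h : x = ∑ g, x.coeff g • MonoidAlgebra.single g (1:ℂ) := by
      ext g
      simp [MonoidAlgebra.coeff_sum, Finsupp.single_apply]
    conv_lhs => rw [h, map_sum, Finset.sum_apply]
    refine Finset.sum_congr rfl fun g _ => ?_
    rw [map_smul, Pi.smul_apply, hρ]
  refine ⟨n, d, ρ, fun i => Nat.pos_of_ne_zero (hd i).out, ?_, ?_⟩
  · intro f hf g
    let F : MonoidAlgebra ℂ G := ∑ a, f a⁻¹ • MonoidAlgebra.single a (1:ℂ)
    have hF : ∀ a, F.coeff a = f a⁻¹ := by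
      intro a
      simp [F, MonoidAlgebra.coeff_sum, Finsupp.single_apply]
    have hFc : ∀ y, F * y = y * F := by
      intro y
      have h1 : ∀ g, F * MonoidAlgebra.single g (1:ℂ) = MonoidAlgebra.single g 1 * F := by
        intro g
        ext a
        simp [hF]
        rw [← hf g⁻¹]; simp [mul_assoc]
      induction y using MonoidAlgebra.induction_on with
      | of g => exact h1 g
      | add a b ha hb => rw [mul_add, add_mul, ha, hb]
      | smul r a ha => rw [mul_smul_comm, smul_mul_assoc, ha]
    have hsc : ∀ i, ∃ l : ℂ, E F i = l • (1 : Matrix _ _ ℂ) := by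
      intro i
      have : E F i ∈ Set.range (Matrix.scalar (Fin (d i))) := by
        apply Matrix.mem_range_scalar_of_commute_single
        intro p q _
        have := congrArg E (hFc (E.symm (Pi.single i (Matrix.single p q 1))))
        rw [map_mul, map_mul, E.apply_symm_apply] at this
        have := congrFun this i
        simp only [Pi.mul_apply, Pi.single_eq_same] at this
        exact this.symm
      obtain ⟨l, hl⟩ := this
      refine ⟨l, ?_⟩
      rw [← hl]
      simp [Matrix.scalar_apply, Matrix.smul_one_eq_diagonal]
    have h1 := hcoefg F g⁻¹
    rw [hF, inv_inv] at h1
    rw [h1]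
    refine Finset.sum_congr rfl fun i _ => ?_
    obtain ⟨l, hl⟩ := hsc i
    have h2 : trace (E F i) = ∑ a, f a⁻¹ * trace (ρ i a) := by
      rw [hsum]; simp [hF, Matrix.trace_sum]
    rw [← h2, hl]
    simp
    ring
  · intro i j g
    let e : MonoidAlgebra ℂ G := E.symm (Pi.single j 1)
    have he : E e = Pi.single j 1 := E.apply_symm_apply _
    have hc : ∀ a, (Fintype.card G : ℂ) * e.coeff a = d j * trace (ρ j a⁻¹) := by
      intro a
      rw [hcoefg, he, Finset.sum_eq_single j]
      · simp
      · intro b _ hb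
        simp [Pi.single_eq_of_ne hb]
      · simp
    have h1 : trace (E e i * ρ i g) = ∑ a, e.coeff a * trace (ρ i (a * g)) := by
      rw [hsum, Finset.sum_mul, Matrix.trace_sum]
      simp
    have h2 : (Fintype.card G : ℂ) * trace (E e i * ρ i g) =
        d j * ∑ a, trace (ρ j a⁻¹) * trace (ρ i (a * g)) := by
      rw [h1, Finset.mul_sum, Finset.mul_sum]
      refine Finset.sum_congr rfl fun a _ => ?_
      rw [← mul_assoc, hc, mul_assoc]
    rw [← h2, he]
    split_ifs with h
    · subst h; simp
    · simp [Pi.single_eq_of_ne h]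

open Matrix in
theorem frob_int {H : Type*} [Group H] [Fintype H] {m k : ℕ}
    (φ : H →* Matrix (Fin m) (Fin m) ℂ) (ψ : H →* Matrix (Fin k) (Fin k) ℂ) :
    ∃ N : ℕ, ∑ h, trace (φ h⁻¹) * trace (ψ h) = (Fintype.card H : ℂ) * N := by
  classical
  let r : Representation ℂ H (Fin m → ℂ) :=
    ((Matrix.toLinAlgEquiv' : Matrix (Fin m) (Fin m) ℂ ≃ₐ[ℂ] _) : _ →* _).comp φ
  let s : Representation ℂ H (Fin k → ℂ) :=
    ((Matrix.toLinAlgEquiv' : Matrix (Fin k) (Fin k) ℂ ≃ₐ[ℂ] _) : _ →* _).comp ψ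
  have h0 : (Nat.card H : ℂ) ≠ 0 := by exact_mod_cast Nat.card_pos.ne'
  have : Invertible (Nat.card H : ℂ) := invertibleOfNonzero h0
  have h := Representation.card_inv_mul_sum_char_mul_char_eq_finrank r s
  have hr : ∀ g, r.character g = trace (φ g) := fun g => Matrix.trace_toLin'_eq (φ g)
  have hs : ∀ g, s.character g = trace (ψ g) := fun g => Matrix.trace_toLin'_eq (ψ g)
  simp only [hr, hs] at h
  refine ⟨Module.finrank ℂ (r.IntertwiningMap s), ?_⟩
  rw [← Nat.card_eq_fintype_card, ← h, mul_inv_cancel_left₀ h0]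
  exact Finset.sum_congr rfl fun _ _ => mul_comm _ _

theorem frob_sumsq {n : ℕ} (M : Fin n → ℤ) (h : ∑ i, M i * M i = 1) :
    ∃ i, (M i = 1 ∨ M i = -1) ∧ ∀ j, j ≠ i → M j = 0 := by
  have h1 : ∃ i, M i ≠ 0 := by
    by_contra! hc
    simp [hc] at h
  obtain ⟨i, hi⟩ := h1
  have h2 : ∀ j, 0 ≤ M j * M j := fun j => mul_self_nonneg _
  have h3 : 1 ≤ M i * M i := by
    have := mul_self_pos.mpr hi
    omega
  rw [← Finset.add_sum_erase _ _ (Finset.mem_univ i)] at h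
  have h4 : 0 ≤ ∑ j ∈ Finset.univ.erase i, M j * M j := Finset.sum_nonneg fun j _ => h2 j
  have h5 : ∑ j ∈ Finset.univ.erase i, M j * M j = 0 := by omega
  rw [Finset.sum_eq_zero_iff_of_nonneg fun j _ => h2 j] at h5
  refine ⟨i, mul_self_eq_one_iff.mp (by omega), fun j hj => ?_⟩
  exact mul_self_eq_zero.mp (h5 j (by simp [hj]))

open Matrix in
theorem frob_kernel_aux {G : Type*} [Group G] [Fintype G] (H : Subgroup G)
    (hfrob : ∀ g : G, g ∉ H → ∀ x ∈ H, g * x * g⁻¹ ∈ H → x = 1) :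
    ∃ f : G → ℂ, (∀ g, (g = 1 ∨ ∀ x, x * g * x⁻¹ ∉ H) → f g = Nat.card H) ∧
      (∀ g, ¬ (g = 1 ∨ ∀ x, x * g * x⁻¹ ∉ H) → f g = 0) ∧
      ∀ g, ∑ a, f a⁻¹ * f (a * g) = Nat.card G * f g := by
  classical
  obtain ⟨n, d, ρ, hd, hspan, hconv⟩ := frob_wedd G
  obtain ⟨n', d', σ, hd', hspan', hconv'⟩ := frob_wedd H
  have hG0 : (Fintype.card G : ℂ) ≠ 0 := by exact_mod_cast Fintype.card_ne_zero
  have hH0 : (Fintype.card H : ℂ) ≠ 0 := by exact_mod_cast Fintype.card_ne_zero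
  let u : Fin n' → G → ℂ := fun j g => if h : g ∈ H then trace (σ j ⟨g, h⟩) - d' j else 0
  have hu1 : ∀ j, u j 1 = 0 := by
    intro j
    have : σ j ⟨1, H.one_mem⟩ = 1 := map_one (σ j)
    simp [u, this]
  have huH : ∀ j (h : H), u j h = trace (σ j h) - d' j := by
    intro j h; simp [u]
  have huN : ∀ j g, g ∉ H → u j g = 0 := by
    intro j g h; simp [u, h]
  have hconjρ : ∀ i x g, trace (ρ i (x * g * x⁻¹)) = trace (ρ i g) := by
    intro i x g
    rw [map_mul, trace_mul_comm, ← map_mul]; simp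
  have hconjσ : ∀ i x g, trace (σ i (x * g * x⁻¹)) = trace (σ i g) := by
    intro i x g
    rw [map_mul, trace_mul_comm, ← map_mul]; simp
  let θ : Fin n' → G → ℂ := fun j g => d' j + (Fintype.card H : ℂ)⁻¹ * ∑ x, u j (x * g * x⁻¹)
  have hθconj : ∀ j y g, θ j (y * g * y⁻¹) = θ j g := by
    intro j y g
    simp only [θ]
    congr 2
    refine Fintype.sum_equiv (Equiv.mulRight y) _ _ fun x => ?_
    simp [mul_assoc]
  have hθH : ∀ j (h : H), θ j h = trace (σ j h) := by
    intro j h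
    by_cases h1 : h = 1
    · subst h1
      simp [θ, hu1]
    · have : ∑ x, u j (x * h * x⁻¹) = ∑ x : G, if x ∈ H then u j h else 0 := by
        refine Finset.sum_congr rfl fun x _ => ?_
        split_ifs with hx
        · have e1 : x * h * x⁻¹ = ((⟨x, hx⟩ * h * ⟨x, hx⟩⁻¹ : H) : G) := rfl
          rw [e1, huH, huH, hconjσ]
        · apply huN
          intro hc
          exact h1 (Subtype.ext (hfrob x hx h h.2 hc))
      have hc : (∑ x : G, if x ∈ H then u j h else 0) = Fintype.card H * u j h := by
        rw [← Finset.sum_filter, Finset.sum_const, nsmul_eq_mul]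
        congr 2
        rw [Fintype.card_subtype]
      simp only [θ]
      rw [this, hc, inv_mul_cancel_left₀ hH0, huH]
      ring
  have hθ1 : ∀ j, θ j 1 = d' j := by
    intro j
    have := hθH j 1
    simpa using this
  have hθK : ∀ j g, (∀ x, x * g * x⁻¹ ∉ H) → θ j g = d' j := by
    intro j g hg
    simp only [θ]
    rw [Finset.sum_eq_zero fun x _ => huN j _ (hg x)]
    simp
  have hpair : ∀ j (c : G → ℂ), (∀ x g, c (x * g * x⁻¹) = c g) →
      ∑ g, θ j g⁻¹ * c g = d' j * ∑ g, c g +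
        (Fintype.card H : ℂ)⁻¹ * (Fintype.card G * ∑ h : H, (trace (σ j h⁻¹) - d' j) * c h) := by
    intro j c hc
    simp only [θ, add_mul, Finset.sum_add_distrib, Finset.mul_sum, Finset.sum_mul, mul_assoc]
    congr 1
    rw [Finset.sum_comm]
    have : ∀ x : G, ∑ g, (Fintype.card H : ℂ)⁻¹ * (u j (x * (g⁻¹ * x⁻¹)) * c g) =
        (Fintype.card H : ℂ)⁻¹ * ∑ h : H, (trace (σ j h⁻¹) - d' j) * c h := by
      intro x
      rw [← Finset.mul_sum]
      congr 1
      have e1 : ∑ g, u j (x * (g⁻¹ * x⁻¹)) * c g = ∑ g, u j g⁻¹ * c g := by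
        refine Fintype.sum_equiv (MulAut.conj x).toEquiv _ _ fun g => ?_
        have hc' := (hc x g).symm
        simp [mul_assoc] at hc' ⊢
        exact Or.inl hc'
      rw [e1]
      have e2 : ∑ g, u j g⁻¹ * c g = ∑ g ∈ Finset.univ.filter (· ∈ H), u j g⁻¹ * c g := by
        rw [Finset.sum_filter]
        refine Finset.sum_congr rfl fun g _ => ?_
        split_ifs with hg
        · rfl
        · rw [huN j _ (by simpa using hg), zero_mul]
      rw [e2, Finset.sum_subtype (p := (· ∈ H)) _ (by simp)]
      refine Finset.sum_congr rfl fun h _ => ?_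
      rw [← huH]; rfl
    rw [Finset.sum_congr rfl fun x _ => this x]
    simp only [Finset.sum_const, nsmul_eq_mul, Finset.mul_sum, Finset.card_univ]
    refine Finset.sum_congr rfl fun h _ => ?_
    ring
  have hint : ∀ j i, ∃ M : ℤ, ∑ g, θ j g⁻¹ * trace (ρ i g) = Fintype.card G * M := by
    intro j i
    obtain ⟨N1, h1⟩ := frob_int (1 : G →* Matrix (Fin 1) (Fin 1) ℂ) (ρ i)
    obtain ⟨N2, h2⟩ := frob_int (σ j) ((ρ i).comp H.subtype)
    obtain ⟨N3, h3⟩ := frob_int (1 : H →* Matrix (Fin 1) (Fin 1) ℂ) ((ρ i).comp H.subtype)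
    simp at h1 h2 h3
    refine ⟨d' j * N1 + N2 - d' j * N3, ?_⟩
    rw [hpair j _ (hconjρ i), h1]
    simp only [sub_mul, Finset.sum_sub_distrib, ← Finset.mul_sum]
    rw [h2, h3]
    push_cast
    field_simp
    ring
  choose M hM using hint
  have hexp : ∀ j g, θ j g = ∑ i, (M j i : ℂ) * trace (ρ i g) := by
    intro j g
    have := hspan (θ j) (hθconj j) g
    simp only [hM, mul_assoc, ← Finset.mul_sum] at this
    exact mul_left_cancel₀ hG0 this
  have horth' : ∀ i j, (d' j : ℂ) * ∑ a, trace (σ j a⁻¹) * trace (σ i a) =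
      if i = j then (Fintype.card H : ℂ) * d' i else 0 := by
    intro i j
    have := hconv' i j 1
    simpa using this
  have hd'0 : ∀ j, (d' j : ℂ) ≠ 0 := fun j => by exact_mod_cast (hd' j).ne'
  have hnorm' : ∀ j, ∑ a, trace (σ j a⁻¹) * trace (σ j a) = (Fintype.card H : ℂ) := by
    intro j
    have := horth' j j
    rw [if_pos rfl, mul_comm] at this
    exact mul_right_cancel₀ (hd'0 j) this
  have hnorm : ∀ j, ∑ g, θ j g⁻¹ * θ j g = Fintype.card G := by
    intro j
    rw [hpair j _ (hθconj j)]
    have e1 : ∑ g, θ j g = d' j * Fintype.card G +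
        (Fintype.card H : ℂ)⁻¹ * (Fintype.card G * ∑ h : H, (trace (σ j h⁻¹) - d' j)) := by
      have := hpair j 1 (by simp)
      simp only [Pi.one_apply, mul_one] at this
      rw [← Equiv.sum_comp (Equiv.inv G) (θ j)]
      simpa using this
    have e2 : ∑ h : H, trace (σ j h⁻¹) = ∑ h : H, trace (σ j h) :=
      Equiv.sum_comp (Equiv.inv H) (fun h => trace (σ j h))
    rw [e1]
    simp only [hθH, sub_mul, Finset.sum_sub_distrib, hnorm', e2, ← Finset.mul_sum]
    simp only [Finset.sum_const, nsmul_eq_mul, Finset.card_univ]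
    field_simp
    ring
  have hMsq : ∀ j, ∑ i, M j i * M j i = 1 := by
    intro j
    have h := hnorm j
    have e : ∑ g, θ j g⁻¹ * θ j g = Fintype.card G * ∑ i, (M j i : ℂ) * M j i := by
      conv_lhs => enter [2, g]; rw [hexp j g, Finset.mul_sum]
      rw [Finset.sum_comm, Finset.mul_sum]
      refine Finset.sum_congr rfl fun i _ => ?_
      rw [← mul_assoc, ← hM, Finset.sum_mul]
      refine Finset.sum_congr rfl fun g _ => ?_
      ring
    rw [e] at h
    have h2 := mul_left_cancel₀ hG0 (h.trans (mul_one _).symm)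
    exact_mod_cast h2
  have hirr : ∀ j, ∃ i, ∀ g, θ j g = trace (ρ i g) := by
    intro j
    obtain ⟨i, hi, hj⟩ := frob_sumsq (M j) (hMsq j)
    refine ⟨i, ?_⟩
    have h1 : ∀ g, θ j g = M j i * trace (ρ i g) := by
      intro g
      rw [hexp, Finset.sum_eq_single i]
      · intro b _ hb
        rw [hj b hb]; simp
      · simp
    rcases hi with hi | hi
    · intro g
      rw [h1, hi]; simp
    · exfalso
      have := h1 1
      rw [hθ1, hi] at this
      simp at this
      have h2 : (d' j : ℂ) + d i = 0 := by rw [this]; ring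
      have h3 := hd' j
      have : d' j + d i = 0 := by exact_mod_cast h2
      omega
  choose ι hι using hirr
  have hdim : ∀ j, (d (ι j) : ℂ) = d' j := by
    intro j
    rw [← hθ1, hι]; simp
  have hinj : ∀ j k, ι j = ι k → j = k := by
    intro j k hjk
    by_contra hne
    have h1 : ∀ h : H, trace (σ k h) = trace (σ j h) := by
      intro h
      rw [← hθH, ← hθH, hι, hι, hjk]
    have h2 := horth' k j
    rw [if_neg (Ne.symm hne)] at h2
    simp only [h1, hnorm'] at h2
    exact mul_ne_zero (hd'0 j) hH0 h2
  let f : G → ℂ := fun g => ∑ j, d' j * θ j g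
  have hreg : ∀ h : H, ∑ j, (d' j : ℂ) * trace (σ j h) = if h = 1 then (Fintype.card H : ℂ) else 0 := by
    intro h
    have := hspan' (fun a => if a = 1 then 1 else 0) (by intro x g; simp) h
    simpa using this.symm
  have hdd : ∑ j, (d' j : ℂ) * d' j = Fintype.card H := by
    have := hreg 1
    simpa using this
  refine ⟨f, ?_, ?_, ?_⟩
  · rintro g (rfl | hg)
    · simp [f, hθ1, hdd]
    · simp [f, hθK _ g hg, hdd]
  · intro g hg
    push Not at hg
    obtain ⟨hg1, x, hx⟩ := hg
    have e : f g = f (x * g * x⁻¹) := by simp only [f, hθconj]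
    have e2 := hreg ⟨x * g * x⁻¹, hx⟩
    rw [if_neg] at e2
    · rw [e, ← e2]
      simp only [f]
      refine Finset.sum_congr rfl fun j _ => ?_
      rw [← hθH]
    · intro hc
      apply hg1
      have := congrArg Subtype.val hc
      simpa using this
  · intro g
    have h1 : ∀ a, f a⁻¹ * f (a * g) =
        ∑ j, ∑ k, (d' k : ℂ) * (d' j * (trace (ρ (ι j) a⁻¹) * trace (ρ (ι k) (a * g)))) := by
      intro a
      simp only [f, hι]
      rw [Finset.sum_mul_sum]
      refine Finset.sum_congr rfl fun j _ => Finset.sum_congr rfl fun k _ => ?_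
      ring
    simp only [h1]
    rw [Finset.sum_comm]
    simp only [f, Finset.mul_sum]
    refine Finset.sum_congr rfl fun j _ => ?_
    rw [Finset.sum_comm]
    simp only [← Finset.mul_sum]
    rw [Finset.sum_eq_single j]
    · have := hconv (ι j) (ι j) g
      rw [if_pos rfl, hdim] at this
      rw [this, hι, Nat.card_eq_fintype_card]
      ring
    · intro k _ hk
      have := hconv (ι k) (ι j) g
      rw [if_neg (fun h => hk (hinj _ _ h)), hdim] at this
      rw [this, mul_zero]
    · simp

theorem frob_kernel {G : Type*} [Group G] [Finite G] (H : Subgroup G)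
    (hfrob : ∀ g : G, g ∉ H → ∀ x ∈ H, g * x * g⁻¹ ∈ H → x = 1) :
    ∃ K : Subgroup G, K.Normal ∧ (∀ g, g ∈ K ↔ (g = 1 ∨ ∀ x, x * g * x⁻¹ ∉ H)) ∧
      Nat.card K * Nat.card H = Nat.card G := by
  classical
  have := Fintype.ofFinite G
  obtain ⟨f, hf1, hf0, hconv⟩ := frob_kernel_aux H hfrob
  let S : Set G := {g | g = 1 ∨ ∀ x, x * g * x⁻¹ ∉ H}
  have hf1 : ∀ g ∈ S, f g = Nat.card H := hf1
  have hf0 : ∀ g ∉ S, f g = 0 := hf0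
  have hH : Nat.card H ≠ 0 := Nat.card_pos.ne'
  have hinv : ∀ g, g ∈ S → g⁻¹ ∈ S := by
    rintro g (rfl | h)
    · left; simp
    · right
      intro x hx
      apply h x
      have := H.inv_mem hx
      simpa [mul_assoc] using this
  have hconj : ∀ g, g ∈ S → ∀ y, y * g * y⁻¹ ∈ S := by
    rintro g (rfl | h) y
    · left; simp
    · right
      intro x hx
      apply h (x * y)
      simpa [mul_assoc] using hx
  have hsum : ∀ g, ∑ a, f a⁻¹ * f (a * g) =
      ((Nat.card H * Nat.card H * (Finset.univ.filter fun a => a⁻¹ ∈ S ∧ a * g ∈ S).card : ℕ) : ℂ) := by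
    intro g
    have : ∀ a, f a⁻¹ * f (a * g) =
        if a⁻¹ ∈ S ∧ a * g ∈ S then (Nat.card H : ℂ) * Nat.card H else 0 := by
      intro a
      split_ifs with h
      · rw [hf1 _ h.1, hf1 _ h.2]
      · by_cases h1 : a⁻¹ ∈ S
        · rw [hf0 (a * g) (fun h2 => h ⟨h1, h2⟩), mul_zero]
        · rw [hf0 _ h1, zero_mul]
    simp only [this]
    rw [← Finset.sum_filter, Finset.sum_const, nsmul_eq_mul]
    push_cast
    ring
  have hmul : ∀ a b, a ∈ S → b ∈ S → a * b ∈ S := by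
    intro a b ha hb
    by_contra hab
    have h := hconv (a * b)
    rw [hsum, hf0 _ hab, mul_zero] at h
    have h2 : Nat.card H * Nat.card H *
      (Finset.univ.filter fun c => c⁻¹ ∈ S ∧ c * (a * b) ∈ S).card = 0 := by exact_mod_cast h
    have h3 : (Finset.univ.filter fun c => c⁻¹ ∈ S ∧ c * (a * b) ∈ S).card = 0 := by
      simpa [hH] using h2
    rw [Finset.card_eq_zero] at h3
    have : a⁻¹ ∈ (Finset.univ.filter fun c => c⁻¹ ∈ S ∧ c * (a * b) ∈ S) := by
      simp [ha, hb]
    rw [h3] at this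
    simp at this
  let K : Subgroup G :=
    { carrier := S
      one_mem' := Or.inl rfl
      mul_mem' := fun {a b} ha hb => hmul a b ha hb
      inv_mem' := fun {a} ha => hinv a ha }
  refine ⟨K, ⟨fun g hg y => hconj g hg y⟩, fun g => Iff.rfl, ?_⟩
  have h := hconv 1
  rw [hsum, hf1 1 (Or.inl rfl)] at h
  have h2 : Nat.card H * Nat.card H *
    (Finset.univ.filter fun c => c⁻¹ ∈ S ∧ c * 1 ∈ S).card = Nat.card G * Nat.card H := by
      exact_mod_cast h
  have h3 : (Finset.univ.filter fun c => c⁻¹ ∈ S ∧ c * 1 ∈ S).card = Nat.card K := by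
    rw [Nat.card_eq_fintype_card, Fintype.card_subtype]
    congr 1
    ext c
    simp only [Finset.mem_filter, Finset.mem_univ, true_and, mul_one]
    exact ⟨fun h => h.2, fun h => ⟨hinv c h, h⟩⟩
  rw [h3] at h2
  apply mul_right_cancel₀ hH
  rw [← h2]
  ring

theorem frob_sum_zero {H V : Type*} [Group H] [AddCommGroup V] [DistribMulAction H V]
    (hfp : ∀ (h : H) (v : V), h • v = v → h = 1 ∨ v = 0)
    (d : H) (p : ℕ) (hp : d ^ p = 1) (hd : d ≠ 1) (w : V) :
    ∑ i ∈ Finset.range p, d ^ i • w = 0 := by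
  refine (hfp d _ ?_).resolve_left hd
  rw [Finset.smul_sum]
  have h1 : ∀ i, d • d ^ i • w = d ^ (i + 1) • w := fun i => by rw [pow_succ', mul_smul]
  simp only [h1]
  have h2 := Finset.sum_range_succ (fun i => d ^ i • w) p
  rw [Finset.sum_range_succ'] at h2
  simp only [hp, pow_zero] at h2
  exact add_right_cancel h2

theorem frob_torsion {H V : Type*} [Group H] [Finite H] [AddCommGroup V] [Finite V]
    [DistribMulAction H V]
    (hfp : ∀ (h : H) (v : V), h • v = v → h = 1 ∨ v = 0)
    (c : H) (q : ℕ) (hq : q.Prime) (hcq : c ^ q = 1) (hc : c ≠ 1) (v : V) (hv : q • v = 0) :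
    v = 0 := by
  have := Fact.mk hq
  have ho : orderOf c = q := orderOf_eq_prime hcq hc
  have hP : IsPGroup q (Subgroup.zpowers c) :=
    IsPGroup.of_card (n := 1) (by rw [Nat.card_zpowers, ho, pow_one])
  have h1 := hP.card_modEq_card_fixedPoints V
  have h2 : MulAction.fixedPoints (Subgroup.zpowers c) V = {0} := by
    ext w
    simp only [MulAction.mem_fixedPoints, Set.mem_singleton_iff]
    constructor
    · intro h
      exact (hfp c w (h ⟨c, Subgroup.mem_zpowers c⟩)).resolve_left hc
    · rintro rfl m
      exact smul_zero m
  rw [h2] at h1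
  have h3 : ¬ q ∣ Nat.card V := by
    intro h
    have h4 : Nat.card V ≡ 0 [MOD q] := (Nat.modEq_zero_iff_dvd).mpr h
    have h5 := h1.symm.trans h4
    simp only [Nat.card_unique] at h5
    have := (Nat.modEq_zero_iff_dvd).mp h5
    exact hq.one_lt.ne' (Nat.dvd_one.mp this)
  have h6 : addOrderOf v ∣ q := addOrderOf_dvd_of_nsmul_eq_zero hv
  rcases (Nat.dvd_prime hq).mp h6 with h | h
  · exact AddMonoid.addOrderOf_eq_one_iff.mp h
  · exact absurd (h ▸ addOrderOf_dvd_natCard v) h3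

theorem frob_pow_mul {H : Type*} [Group H] (c b : H) (k : ℕ) (hbc : b * c = c ^ k * b) (i j : ℕ) :
    (c ^ i * b) ^ j = c ^ (i * ∑ t ∈ Finset.range j, k ^ t) * b ^ j := by
  have hb : ∀ n, b * c ^ n = c ^ (k * n) * b := by
    intro n
    induction n with
    | zero => simp
    | succ n ih => rw [pow_succ, ← mul_assoc, ih, mul_assoc, hbc, ← mul_assoc, ← pow_add]; rfl
  induction j with
  | zero => simp
  | succ j ih =>
    rw [pow_succ', ih, geom_sum_succ, mul_assoc, ← mul_assoc b, hb, mul_assoc, ← pow_succ',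
      ← mul_assoc, ← pow_add]
    congr 2
    ring

theorem frob_L {H V : Type*} [Group H] [Finite H] [AddCommGroup V] [Finite V] [Nontrivial V]
    [DistribMulAction H V]
    (hfp : ∀ (h : H) (v : V), h • v = v → h = 1 ∨ v = 0)
    (c b : H) (q p k : ℕ) (hq : q.Prime) (hcq : c ^ q = 1) (hc : c ≠ 1)
    (hbc : b * c = c ^ k * b) (hb : b ∉ Subgroup.zpowers c) (hp : 0 < p) (hbp : b ^ p = 1)
    (hsp : q ∣ ∑ t ∈ Finset.range p, k ^ t)
    (hsj : ∀ j, 0 < j → j < p → ¬ q ∣ ∑ t ∈ Finset.range j, k ^ t) : False := by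
  have := Fact.mk hq
  have ho : orderOf c = q := orderOf_eq_prime hcq hc
  obtain ⟨v, hv⟩ := exists_ne (0 : V)
  apply hv
  apply frob_torsion hfp c q hq hcq hc
  have h1 : ∑ i ∈ Finset.range q, ∑ j ∈ Finset.range p, (c ^ i * b) ^ j • v = 0 := by
    refine Finset.sum_eq_zero fun i _ => ?_
    apply frob_sum_zero hfp
    · rw [frob_pow_mul c b k hbc, hbp, mul_one, ← orderOf_dvd_iff_pow_eq_one, ho]
      exact Dvd.dvd.mul_left hsp i
    · intro h
      apply hb
      rw [eq_inv_of_mul_eq_one_right h]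
      exact Subgroup.inv_mem _ (Subgroup.npow_mem_zpowers c i)
  rw [Finset.sum_comm, Finset.sum_eq_single_of_mem 0 (Finset.mem_range.mpr hp)] at h1
  · simpa using h1
  · intro j hj hj0
    have h2 : ∀ i, (c ^ i * b) ^ j • v = (c ^ (∑ t ∈ Finset.range j, k ^ t)) ^ i • (b ^ j • v) := by
      intro i
      rw [frob_pow_mul c b k hbc, mul_smul, ← pow_mul, mul_comm i]
    simp only [h2]
    apply frob_sum_zero hfp
    · rw [← pow_mul, mul_comm, pow_mul, hcq, one_pow]
    · rw [Ne, ← orderOf_dvd_iff_pow_eq_one, ho]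
      exact hsj j (Nat.pos_of_ne_zero hj0) (Finset.mem_range.mp hj)

theorem frob_cyc_aux.{u} (p : ℕ) (hp : p.Prime) (hodd : Odd p) : ∀ (n : ℕ) (P : Type u) [Group P]
    [Finite P], Nat.card P = p ^ n →
    (∀ a b : P, a ^ p = 1 → b ^ p = 1 → a ≠ 1 → b * a = a * b → b ∈ Subgroup.zpowers a) →
    IsCyclic P := by
  have := Fact.mk hp
  intro n
  induction n with
  | zero =>
    intro P _ _ hc _
    have : Subsingleton P := (Nat.card_eq_one_iff_unique.mp (by simpa using hc)).1
    infer_instance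
  | succ n ih =>
    intro P _ _ hc hU
    rcases Nat.eq_zero_or_pos n with rfl | hn
    · exact isCyclic_of_prime_card (p := p) (by simpa using hc)
    obtain ⟨M, hM⟩ := Sylow.exists_subgroup_card_pow_prime (G := P) p (n := n)
      (hc ▸ pow_dvd_pow p (Nat.le_succ n))
    have hMi : M.index = p := by
      have := M.card_mul_index
      rw [hM, hc, pow_succ] at this
      exact Nat.eq_of_mul_eq_mul_left (pow_pos hp.pos n) this
    have hMn : M.Normal := by
      apply Subgroup.normal_of_index_eq_minFac_card
      rw [hMi, hc, hp.pow_minFac (Nat.succ_ne_zero n)]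
    have hMc : IsCyclic M := by
      apply ih M hM
      intro a b ha hb ha1 hab
      have h := hU a b (by exact_mod_cast ha) (by exact_mod_cast hb) (by simpa using ha1)
        (by exact_mod_cast hab)
      obtain ⟨z, hz⟩ := Subgroup.mem_zpowers_iff.mp h
      exact Subgroup.mem_zpowers_iff.mpr ⟨z, Subtype.ext (by simpa using hz)⟩
    obtain ⟨c0, hc0⟩ := hMc.exists_generator
    obtain ⟨c, hcdef⟩ : ∃ c : P, c = (c0 : P) := ⟨_, rfl⟩
    have hMmem : ∀ y ∈ M, ∃ j : ℕ, y = c ^ j := by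
      intro y hy
      obtain ⟨j, hj⟩ := (mem_powers_iff_mem_zpowers (x := c0)).mpr (hc0 ⟨y, hy⟩)
      exact ⟨j, by rw [hcdef]; simpa using (congrArg Subtype.val hj).symm⟩
    have hco : orderOf c = p ^ n := by
      rw [hcdef, Subgroup.orderOf_coe, orderOf_eq_card_of_forall_mem_zpowers hc0, hM]
    have hcM : c ∈ M := hcdef ▸ c0.2
    obtain ⟨x, hx⟩ : ∃ x, x ∉ M := by
      by_contra! hcon
      have : M = ⊤ := by ext; simp [hcon]
      rw [this, Subgroup.index_top] at hMi
      exact hp.one_lt.ne hMi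
    obtain ⟨k, hk⟩ := hMmem _ (hMn.conj_mem c hcM x)
    have hxc : x * c = c ^ k * x := by rw [← hk]; group
    have hxpM : x ^ p ∈ M := hMi ▸ M.pow_index_mem x
    obtain ⟨j, hj⟩ := hMmem _ hxpM
    by_cases hpj : p ∣ j
    swap
    ·
      have h1 : orderOf (x ^ p) = p ^ n := by
        rw [hj, Nat.Coprime.orderOf_pow, hco]
        rw [hco]
        exact Nat.Coprime.pow_left n ((Nat.Prime.coprime_iff_not_dvd hp).mpr hpj)
      apply isCyclic_of_orderOf_eq_card x
      rw [hc]
      obtain ⟨t, ht, hxt⟩ := (Nat.dvd_prime_pow hp).mp (hc ▸ orderOf_dvd_natCard x)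
      rw [hxt]
      have : t = n + 1 := by
        by_contra hne
        have ht' : t ≤ n := by omega
        have h2 : (x ^ p) ^ (p ^ (n - 1)) = 1 := by
          rw [← pow_mul, ← pow_succ', Nat.sub_add_cancel hn, ← orderOf_dvd_iff_pow_eq_one, hxt]
          exact pow_dvd_pow p ht'
        rw [← orderOf_dvd_iff_pow_eq_one, h1] at h2
        have := (Nat.pow_dvd_pow_iff_le_right hp.one_lt).mp h2
        omega
      rw [this]
    · exfalso
      have hk1 : (k : ZMod p) = 1 := by
        have hxn : ∀ m, x ^ m * c = c ^ (k ^ m) * x ^ m := by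
          intro m
          induction m with
          | zero => simp
          | succ m ihm =>
            have hb : ∀ n, x * c ^ n = c ^ (k * n) * x := by
              intro n
              induction n with
              | zero => simp
              | succ n ih =>
                rw [pow_succ, ← mul_assoc, ih, mul_assoc, hxc, ← mul_assoc, ← pow_add]; rfl
            rw [pow_succ', mul_assoc, ihm, ← mul_assoc, hb, mul_assoc, ← pow_succ', ← pow_succ']
        have h1 := hxn p
        rw [hj, ← pow_succ, ← pow_add, pow_eq_pow_iff_modEq, hco] at h1
        have h2 : j + 1 ≡ k ^ p + j [MOD p] := h1.of_dvd (dvd_pow_self p hn.ne')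
        have h3 := (ZMod.natCast_eq_natCast_iff _ _ _).mpr h2
        push_cast at h3
        rw [ZMod.pow_card] at h3
        linear_combination -h3
      obtain ⟨l, hl⟩ : (p : ℤ) ∣ k - 1 := by
        rw [← ZMod.intCast_zmod_eq_zero_iff_dvd]
        push_cast
        rw [hk1]; ring
      have hs : (p : ℤ) ^ 2 ∣ (∑ t ∈ Finset.range p, (k : ℤ) ^ t) - p := by
        have := odd_sq_dvd_geom_sum₂_sub (R := ℤ) (a := 1) (b := l) hodd
        have hkl : (1 + p * l : ℤ) = k := by linarith
        simpa [hkl] using this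
      obtain ⟨w, hw⟩ := hs
      obtain ⟨j', rfl⟩ := hpj
      have hcop : IsCoprime (1 + p * w : ℤ) ((p : ℤ) ^ (n - 1)) := by
        apply IsCoprime.pow_right
        exact ⟨1, -w, by ring⟩
      obtain ⟨α, β, hαβ⟩ := hcop
      obtain ⟨t, ht⟩ : ∃ t : ℕ, (p : ℤ) ^ (n - 1) ∣ t - (-α * j') := by
        refine ⟨((-α * j') % ((p : ℤ) ^ (n - 1))).toNat, ?_⟩
        rw [Int.toNat_of_nonneg (Int.emod_nonneg _ (by have := hp.pos; positivity))]
        exact (Int.mod_modEq (-α * j') _).symm.dvd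
      have hb1 : (c ^ t * x) ^ p = 1 := by
        rw [frob_pow_mul c x k hxc, hj, ← pow_add, ← orderOf_dvd_iff_pow_eq_one, hco]
        have : ((p ^ n : ℕ) : ℤ) ∣ ((t * ∑ i ∈ Finset.range p, k ^ i + p * j' : ℕ) : ℤ) := by
          push_cast
          obtain ⟨e, he⟩ := ht
          have hs2 : (∑ t ∈ Finset.range p, (k : ℤ) ^ t) = p * (1 + p * w) := by linarith
          have ht2 : (t : ℤ) = p ^ (n - 1) * e - α * j' := by linarith
          rw [hs2, ht2]
          have hpn : (p : ℤ) ^ n = p * p ^ (n - 1) := by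
            rw [← pow_succ', Nat.sub_add_cancel hn]
          rw [hpn]
          refine ⟨e * (1 + p * w) + β * j', ?_⟩
          linear_combination (-(p : ℤ) * j') * hαβ
        exact_mod_cast this
      have hbM : c ^ t * x ∉ M := fun h => hx ((M.mul_mem_cancel_left (M.pow_mem hcM t)).mp h)
      have hpn : p ^ (n - 1) * p = p ^ n := by rw [← pow_succ, Nat.sub_add_cancel hn]
      have hb : ∀ n, x * c ^ n = c ^ (k * n) * x := by
        intro n
        induction n with
        | zero => simp
        | succ n ih =>
          rw [pow_succ, ← mul_assoc, ih, mul_assoc, hxc, ← mul_assoc, ← pow_add]; rfl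
      have := hU (c ^ p ^ (n - 1)) (c ^ t * x)
        (by rw [← pow_mul, hpn, ← hco, pow_orderOf_eq_one]) hb1
        (by
          rw [Ne, ← orderOf_dvd_iff_pow_eq_one, hco, Nat.pow_dvd_pow_iff_le_right hp.one_lt]
          omega)
        (by
          rw [mul_assoc, hb, ← mul_assoc, ← mul_assoc, ← pow_add, ← pow_add]
          congr 1
          rw [pow_eq_pow_iff_modEq, hco, add_comm t]
          apply Nat.ModEq.add_right
          rw [Nat.modEq_iff_dvd]
          push_cast
          refine ⟨-l, ?_⟩
          have hpn' : (p : ℤ) ^ n = p ^ (n - 1) * p := by exact_mod_cast hpn.symm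
          rw [hpn']
          linear_combination (-(p : ℤ) ^ (n - 1)) * hl)
      apply hbM
      exact (Subgroup.zpowers_le.mpr (M.pow_mem hcM _)) this

theorem frob_zgroup {H V : Type*} [Group H] [Finite H] [AddCommGroup V] [Finite V] [Nontrivial V]
    [DistribMulAction H V]
    (hfp : ∀ (h : H) (v : V), h • v = v → h = 1 ∨ v = 0) (hodd : ¬ 2 ∣ Nat.card H) :
    IsZGroup H := by
  refine ⟨fun p hp P => ?_⟩
  have := Fact.mk hp
  rcases hp.eq_two_or_odd' with rfl | hpo
  · have h1 : Nat.card P = 1 := by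
      rw [P.card_eq_multiplicity, Nat.factorization_eq_zero_of_not_dvd hodd, pow_zero]
    have : Subsingleton P := (Nat.card_eq_one_iff_unique.mp h1).1
    infer_instance
  · apply frob_cyc_aux p hp hpo _ P P.card_eq_multiplicity
    intro a b ha hb ha1 hab
    by_contra hcon
    refine frob_L hfp (a : H) (b : H) p p 1 hp (by exact_mod_cast ha) (by simpa using ha1)
      (by rw [pow_one]; exact_mod_cast hab) ?_ hp.pos (by exact_mod_cast hb) (by simp) ?_
    · intro h
      apply hcon
      obtain ⟨z, hz⟩ := Subgroup.mem_zpowers_iff.mp h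
      exact Subgroup.mem_zpowers_iff.mpr ⟨z, Subtype.ext (by simpa using hz)⟩
    · intro j h0 hj hd
      simp at hd
      exact absurd (Nat.le_of_dvd h0 hd) (by omega)

open scoped commutatorElement in
theorem frob_center_odd {H V : Type*} [Group H] [Finite H] [Nontrivial H]
    [AddCommGroup V] [Finite V] [Nontrivial V]
    [DistribMulAction H V]
    (hfp : ∀ (h : H) (v : V), h • v = v → h = 1 ∨ v = 0) (hodd : ¬ 2 ∣ Nat.card H) :
    ∃ z : H, z ≠ 1 ∧ ∀ h, z * h = h * z := by
  have hZ := frob_zgroup hfp hodd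
  let C := commutator H
  have hCc : IsCyclic C := IsZGroup.isCyclic_commutator H
  have hcop : (Nat.card C).Coprime C.index := IsZGroup.coprime_commutator_index H
  have hlt : C < ⊤ := IsZGroup.commutator_lt H
  obtain ⟨B, hB⟩ := Subgroup.exists_right_complement'_of_coprime hcop
  have hBi : Nat.card B = C.index := (hB.symm.index_eq_card).symm
  have hdisj : ∀ x, x ∈ C → x ∈ B → x = 1 := by
    intro x hx hy
    have := hB.disjoint
    exact Subgroup.disjoint_def.mp this hx hy
  have hBcomm : ∀ x ∈ B, ∀ y ∈ B, x * y = y * x := by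
    intro x hx y hy
    have h1 : ⁅x, y⁆ = 1 := by
      apply hdisj
      · exact Subgroup.commutator_mem_commutator (Subgroup.mem_top x) (Subgroup.mem_top y)
      · rw [commutatorElement_def]
        exact B.mul_mem (B.mul_mem (B.mul_mem hx hy) (B.inv_mem hx)) (B.inv_mem hy)
    exact commutatorElement_eq_one_iff_mul_comm.mp h1
  have hi1 : C.index ≠ 1 := by
    rw [Ne, Subgroup.index_eq_one]; exact hlt.ne
  obtain ⟨p, hp, hpi⟩ := Nat.exists_prime_and_dvd hi1
  have := Fact.mk hp
  obtain ⟨b0, hb0⟩ := exists_prime_orderOf_dvd_card' (G := B) p (hBi ▸ hpi)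
  obtain ⟨b, hbdef⟩ : ∃ b : H, b = (b0 : H) := ⟨_, rfl⟩
  have hbB : b ∈ B := hbdef ▸ b0.2
  have hbo : orderOf b = p := by rw [hbdef, Subgroup.orderOf_coe, hb0]
  have hbp : b ^ p = 1 := hbo ▸ pow_orderOf_eq_one b
  have hb1 : b ≠ 1 := by
    rintro rfl
    rw [orderOf_one] at hbo
    exact hp.one_lt.ne hbo
  have hbC : b ∉ C := fun h => hb1 (hdisj b h hbB)
  obtain ⟨c0, hc0⟩ := hCc.exists_generator
  obtain ⟨c, hcdef⟩ : ∃ c : H, c = (c0 : H) := ⟨_, rfl⟩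
  have hCmem : ∀ y ∈ C, ∃ j : ℕ, y = c ^ j := by
    intro y hy
    obtain ⟨j, hj⟩ := (mem_powers_iff_mem_zpowers (x := c0)).mpr (hc0 ⟨y, hy⟩)
    exact ⟨j, by rw [hcdef]; simpa using (congrArg Subtype.val hj).symm⟩
  obtain ⟨m, hm⟩ : ∃ m, m = Nat.card C := ⟨_, rfl⟩
  have hm0 : 0 < m := hm ▸ Nat.card_pos
  have hco : orderOf c = m := by
    rw [hcdef, Subgroup.orderOf_coe, orderOf_eq_card_of_forall_mem_zpowers hc0, hm]
  have hcC : c ∈ C := hcdef ▸ c0.2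
  have hCn : C.Normal := inferInstanceAs (commutator H).Normal
  obtain ⟨k, hk⟩ := hCmem _ (hCn.conj_mem c hcC b)
  have hbc : b * c = c ^ k * b := by rw [← hk]; group
  have hbcn : ∀ n, b * c ^ n = c ^ (k * n) * b := by
    intro n
    induction n with
    | zero => simp
    | succ n ih =>
      rw [pow_succ, ← mul_assoc, ih, mul_assoc, hbc, ← mul_assoc, ← pow_add]; rfl
  have hkp : k ^ p ≡ 1 [MOD m] := by
    have hxn : ∀ t, b ^ t * c = c ^ (k ^ t) * b ^ t := by
      intro t
      induction t with
      | zero => simp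
      | succ t ih =>
        rw [pow_succ', mul_assoc, ih, ← mul_assoc, hbcn, mul_assoc, ← pow_succ', ← pow_succ']
    have h1 := hxn p
    rw [hbp, one_mul, mul_one] at h1
    have h2 : c ^ 1 = c ^ k ^ p := by rw [pow_one]; exact h1
    rw [pow_eq_pow_iff_modEq, hco] at h2
    exact h2.symm
  have hkq : ∀ q : ℕ, q.Prime → q ∣ m → (k : ZMod q) = 1 := by
    intro q hq hqm
    have := Fact.mk hq
    by_contra hk1
    have hkpq : (k : ZMod q) ^ p = 1 := by
      have := (ZMod.natCast_eq_natCast_iff _ _ _).mpr (hkp.of_dvd hqm)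
      exact_mod_cast this
    have hsub : (k : ZMod q) - 1 ≠ 0 := sub_ne_zero.mpr hk1
    have hgs : ∀ j, ((∑ t ∈ Finset.range j, k ^ t : ℕ) : ZMod q) * ((k : ZMod q) - 1) =
        (k : ZMod q) ^ j - 1 := by
      intro j
      push_cast
      exact geom_sum_mul (k : ZMod q) j
    obtain ⟨m', rfl⟩ := hqm
    have hm'0 : 0 < m' := Nat.pos_of_mul_pos_left hm0
    refine frob_L hfp (c ^ m') b q p k hq ?_ ?_ ?_ ?_ hp.pos hbp ?_ ?_
    · rw [← pow_mul, mul_comm m', ← hco, pow_orderOf_eq_one]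
    · rw [Ne, ← orderOf_dvd_iff_pow_eq_one, hco]
      intro hd
      have := Nat.le_of_dvd hm'0 hd
      have := hq.two_le
      nlinarith
    · rw [hbcn, ← pow_mul, mul_comm k]
    · intro h
      exact hbC ((Subgroup.zpowers_le.mpr (C.pow_mem hcC m')) h)
    · rw [← ZMod.natCast_eq_zero_iff]
      have := hgs p
      rw [hkpq, sub_self] at this
      exact (mul_eq_zero.mp this).resolve_right hsub
    · intro j hj0 hjp hd
      rw [← ZMod.natCast_eq_zero_iff] at hd
      have := hgs j
      rw [hd, zero_mul] at this
      have hkj : (k : ZMod q) ^ j = 1 := (sub_eq_zero.mp this.symm)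
      have h1 : orderOf (k : ZMod q) ∣ p := orderOf_dvd_of_pow_eq_one hkpq
      have h2 : orderOf (k : ZMod q) ∣ j := orderOf_dvd_of_pow_eq_one hkj
      rcases (Nat.dvd_prime hp).mp h1 with h | h
      · exact hk1 (orderOf_eq_one_iff.mp h)
      · rw [h] at h2
        exact absurd (Nat.le_of_dvd hj0 h2) (by omega)
  have hcops : Nat.Coprime m (∑ t ∈ Finset.range p, k ^ t) := by
    apply Nat.Coprime.symm
    apply Nat.coprime_of_dvd
    intro q hq hqs hqm
    have h1 := hkq q hq hqm
    rw [← ZMod.natCast_eq_zero_iff] at hqs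
    push_cast at hqs
    simp [h1] at hqs
    rw [ZMod.natCast_eq_zero_iff] at hqs
    have hqp : q = p := (Nat.prime_dvd_prime_iff_eq hq hp).mp hqs
    subst hqp
    rw [← hm] at hcop
    exact Nat.Prime.one_lt hq |>.ne' (Nat.eq_one_of_dvd_coprimes hcop hqm hpi)
  have hmk : (m : ℤ) ∣ k - 1 := by
    have h1 : (m : ℤ) ∣ (k : ℤ) ^ p - 1 := by
      have := hkp.symm.dvd
      push_cast at this
      exact this
    rw [← geom_sum_mul] at h1
    refine IsCoprime.dvd_of_dvd_mul_left ?_ h1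
    have := Nat.isCoprime_iff_coprime.mpr hcops
    push_cast at this
    exact this
  have hck : c ^ k = c := by
    conv_rhs => rw [← pow_one c]
    rw [pow_eq_pow_iff_modEq, hco]
    exact ((Nat.modEq_iff_dvd).mpr (by exact_mod_cast hmk)).symm
  rw [hck] at hbc
  refine ⟨b, hb1, fun h => ?_⟩
  have hsup : C ⊔ B ≤ Subgroup.centralizer {b} := by
    apply sup_le
    · intro x hx
      obtain ⟨j, rfl⟩ := hCmem x hx
      rw [Subgroup.mem_centralizer_singleton_iff]
      exact ((show Commute b c from hbc).pow_right j).symm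
    · intro x hx
      rw [Subgroup.mem_centralizer_singleton_iff]
      exact hBcomm x hx b hbB
  rw [hB.sup_eq_top] at hsup
  exact (Subgroup.mem_centralizer_singleton_iff.mp (hsup (Subgroup.mem_top h))).symm

theorem frob_even {H V : Type*} [Group H] [Finite H]
    [AddCommGroup V] [Nontrivial V] [DistribMulAction H V]
    (hfp : ∀ (h : H) (v : V), h • v = v → h = 1 ∨ v = 0) (heven : 2 ∣ Nat.card H) :
    ∃ z : H, (z ≠ 1 ∧ z * z = 1 ∧ ∀ h, z * h = h * z) ∧ ∀ w, w ≠ 1 → w * w = 1 → w = z := by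
  have hinv : ∀ t : H, t ≠ 1 → t * t = 1 → ∀ v : V, t • v = -v := by
    intro t ht htt v
    have h : t • (t • v + v) = t • v + v := by
      rw [smul_add, ← mul_smul, htt, one_smul, add_comm]
    exact eq_neg_of_add_eq_zero_left ((hfp t _ h).resolve_left ht)
  have := Fact.mk Nat.prime_two
  obtain ⟨t, ht⟩ := exists_prime_orderOf_dvd_card' (G := H) 2 heven
  have htt : t * t = 1 := by rw [← sq, ← ht, pow_orderOf_eq_one]
  have ht1 : t ≠ 1 := by
    rintro rfl
    simp at ht
  obtain ⟨v, hv⟩ := exists_ne (0 : V)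
  have huniq : ∀ w, w ≠ 1 → w * w = 1 → w = t := by
    intro w hw hww
    have h : (w * t) • v = v := by
      rw [mul_smul, hinv t ht1 htt, smul_neg, hinv w hw hww, neg_neg]
    have h2 := (hfp _ v h).resolve_right hv
    rw [eq_inv_of_mul_eq_one_left h2]
    exact (eq_inv_of_mul_eq_one_left htt).symm
  refine ⟨t, ⟨ht1, htt, fun h => ?_⟩, huniq⟩
  have h1 := huniq (h * t * h⁻¹) (by simpa using ht1) (by
    rw [show h * t * h⁻¹ * (h * t * h⁻¹) = h * (t * t) * h⁻¹ by group, htt]; simp)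
  exact (mul_inv_eq_iff_eq_mul.mp h1).symm

theorem frob_abstract {X A : Type*} [Group X] [Finite X] [Nontrivial X]
    [CommGroup A] [Finite A] [Nontrivial A] (φ : X →* MulAut A)
    (hfp : ∀ (h : X) (v : A), φ h v = v → h = 1 ∨ v = 1) :
    (∃ z : X, z ≠ 1 ∧ ∀ h, z * h = h * z) ∧ (2 ∣ Nat.card X →
    ∃ z : X, (z ≠ 1 ∧ z * z = 1 ∧ ∀ h, z * h = h * z) ∧ ∀ w, w ≠ 1 → w * w = 1 → w = z) := by
  let _ : DistribMulAction X (Additive A) :=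
    { smul := fun x v => Additive.ofMul (φ x v.toMul)
      one_smul := fun v => by change Additive.ofMul (φ 1 v.toMul) = v; simp
      mul_smul := fun x y v => by
        change Additive.ofMul (φ (x * y) v.toMul) = Additive.ofMul (φ x (φ y v.toMul)); simp
      smul_zero := fun x => by
        change Additive.ofMul (φ x 1) = 0; simp
      smul_add := fun x v w => by
        change Additive.ofMul (φ x (v.toMul * w.toMul)) =
          Additive.ofMul (φ x v.toMul) + Additive.ofMul (φ x w.toMul)
        rw [map_mul]; rfl }
  have hfp' : ∀ (h : X) (v : Additive A), h • v = v → h = 1 ∨ v = 0 := fun h v hv => hfp h v.toMul hv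
  have he := frob_even hfp'
  refine ⟨?_, he⟩
  by_cases h2 : 2 ∣ Nat.card X
  · obtain ⟨z, hz, _⟩ := he h2
    exact ⟨z, hz.1, hz.2.2⟩
  · exact frob_center_odd hfp' h2

theorem frob_coprime {G : Type*} [Group G] [Finite G] (H : Subgroup G)
    (hfrob : ∀ g : G, g ∉ H → ∀ x ∈ H, g * x * g⁻¹ ∈ H → x = 1) :
    Nat.Coprime H.index (Nat.card H) := by
  apply Nat.coprime_of_dvd
  intro p hp hpi hph
  have := Fact.mk hp
  obtain ⟨x, hx⟩ := exists_prime_orderOf_dvd_card' (G := H) p hph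
  have hxo : orderOf (x : G) = p := by rw [Subgroup.orderOf_coe, hx]
  have hP : IsPGroup p (Subgroup.zpowers (x : G)) :=
    IsPGroup.of_card (n := 1) (by rw [Nat.card_zpowers, hxo, pow_one])
  have hx1 : (x : G) ≠ 1 := by
    intro h
    rw [h, orderOf_one] at hxo
    exact hp.one_lt.ne hxo
  have h := hP.card_modEq_card_fixedPoints (G ⧸ H)
  have hfix : MulAction.fixedPoints (Subgroup.zpowers (x : G)) (G ⧸ H) = {((1 : G) : G ⧸ H)} := by
    ext q
    induction q using QuotientGroup.induction_on with
    | H g =>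
    rw [MulAction.mem_fixedPoints, Set.mem_singleton_iff]
    constructor
    · intro hq
      have h1 := hq ⟨x, Subgroup.mem_zpowers _⟩
      have h2 : ((x * g : G) : G ⧸ H) = (g : G ⧸ H) := h1
      rw [eq_comm, QuotientGroup.eq] at h2
      rw [eq_comm, QuotientGroup.eq]
      by_contra hg
      have hg' : g⁻¹ ∉ H := by
        intro h; apply hg; simpa using h
      exact hx1 (hfrob g⁻¹ hg' x x.2 (by simpa [mul_assoc] using h2))
    · rintro hq ⟨y, hy⟩
      rw [hq]
      change ((y * 1 : G) : G ⧸ H) = ((1 : G) : G ⧸ H)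
      rw [eq_comm, QuotientGroup.eq]
      have : Subgroup.zpowers (x : G) ≤ H := by
        rw [Subgroup.zpowers_le]; exact x.2
      simpa using this hy
  rw [hfix] at h
  have h3 : Nat.card (G ⧸ H) ≡ 1 [MOD p] := by simpa using h
  have h4 : Nat.card (G ⧸ H) ≡ 0 [MOD p] := (Nat.modEq_zero_iff_dvd).mpr hpi
  have h5 := h3.symm.trans h4
  rw [Nat.modEq_zero_iff_dvd] at h5
  exact hp.one_lt.ne' (Nat.dvd_one.mp h5)

theorem frob_transfer {X Y : Type*} [Group X] [Group Y] (e : X ≃* Y)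
    (h : (∃ z : X, z ≠ 1 ∧ ∀ h, z * h = h * z) ∧ (2 ∣ Nat.card X →
    ∃ z : X, (z ≠ 1 ∧ z * z = 1 ∧ ∀ h, z * h = h * z) ∧ ∀ w, w ≠ 1 → w * w = 1 → w = z)) :
    (∃ z : Y, z ≠ 1 ∧ ∀ h, z * h = h * z) ∧ (2 ∣ Nat.card Y →
    ∃ z : Y, (z ≠ 1 ∧ z * z = 1 ∧ ∀ h, z * h = h * z) ∧ ∀ w, w ≠ 1 → w * w = 1 → w = z) := by
  obtain ⟨⟨z, hz1, hz⟩, h2⟩ := h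
  have key : ∀ z : X, (∀ h, z * h = h * z) → ∀ h, e z * h = h * e z := by
    intro z hz h
    obtain ⟨h, rfl⟩ := e.surjective h
    rw [← map_mul, hz, map_mul]
  refine ⟨⟨e z, by simpa using hz1, key z hz⟩, fun hc => ?_⟩
  rw [← Nat.card_congr e.toEquiv] at hc
  obtain ⟨z, ⟨a, b, c⟩, d⟩ := h2 hc
  refine ⟨e z, ⟨by simpa using a, by rw [← map_mul, b, map_one], key z c⟩, fun w hw hww => ?_⟩
  obtain ⟨w, rfl⟩ := e.surjective w
  rw [d w (by simpa using hw) (e.injective (by rw [map_mul, hww, map_one]))]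

/-- Two complements of the same order of a normal subgroup are isomorphic. -/
theorem frob_iso {G : Type*} [Group G] [Finite G] (K H X : Subgroup G) [K.Normal]
    (hH : ∀ x ∈ H, x ∈ K → x = 1) (hX : ∀ x ∈ X, x ∈ K → x = 1)
    (hHi : Nat.card H = K.index) (hXi : Nat.card X = K.index) : Nonempty (X ≃* H) := by
  have key : ∀ L : Subgroup G, (∀ x ∈ L, x ∈ K → x = 1) → Nat.card L = K.index →
      Nonempty (L ≃* G ⧸ K) := by
    intro L hL hc
    let f : L →* G ⧸ K := (QuotientGroup.mk' K).comp L.subtype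
    have hf : Function.Injective f := by
      rw [injective_iff_map_eq_one]
      intro x hx
      have : (x : G) ∈ K := (QuotientGroup.eq_one_iff _).mp hx
      exact Subtype.ext (hL x x.2 this)
    exact ⟨MulEquiv.ofBijective f ((Nat.bijective_iff_injective_and_card f).mpr ⟨hf, hc⟩)⟩
  obtain ⟨a⟩ := key H hH hHi
  obtain ⟨b⟩ := key X hX hXi
  exact ⟨b.trans a.symm⟩

theorem frob_main {G : Type*} [Group G] [Finite G] (H : Subgroup G)
    (hne : H ≠ ⊥) (hpr : H ≠ ⊤)
    (hfrob : ∀ g : G, g ∉ H → ∀ x ∈ H, g * x * g⁻¹ ∈ H → x = 1) :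
    (∃ z : H, z ≠ 1 ∧ ∀ h, z * h = h * z) ∧ (2 ∣ Nat.card H →
    ∃ z : H, (z ≠ 1 ∧ z * z = 1 ∧ ∀ h, z * h = h * z) ∧ ∀ w, w ≠ 1 → w * w = 1 → w = z) := by
  obtain ⟨K, hKn, hK, hKc⟩ := frob_kernel H hfrob
  have hcop := frob_coprime H hfrob
  have hKi : Nat.card K = H.index := by
    have := H.index_mul_card
    rw [← hKc] at this
    exact (Nat.eq_of_mul_eq_mul_right Nat.card_pos this).symm
  have hHi : Nat.card H = K.index := by
    have := K.card_mul_index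
    rw [← hKc] at this
    exact (Nat.eq_of_mul_eq_mul_left Nat.card_pos this).symm
  rw [← hKi] at hcop
  have hK1 : Nat.card K ≠ 1 := by
    rw [hKi, Ne, Subgroup.index_eq_one]; exact hpr
  obtain ⟨r, hr, hrK⟩ := Nat.exists_prime_and_dvd hK1
  have := Fact.mk hr
  obtain ⟨R⟩ : Nonempty (Sylow r K) := inferInstance
  obtain ⟨R', hR'⟩ : ∃ R' : Subgroup G, R' = (R : Subgroup K).map K.subtype := ⟨_, rfl⟩
  have hR'K : R' ≤ K := by rw [hR']; exact Subgroup.map_subtype_le _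
  have hR'p : IsPGroup r R' := by rw [hR']; exact R.isPGroup'.map _
  have hR'ne : R' ≠ ⊥ := by
    rw [hR', Ne, Subgroup.map_eq_bot_iff_of_injective _ K.subtype_injective]
    exact R.ne_bot_of_dvd_card hrK
  have hNK := R.normalizer_sup_eq_top
  rw [← hR'] at hNK
  obtain ⟨N, hN⟩ : ∃ N : Subgroup G, N = Subgroup.normalizer (R' : Set G) := ⟨_, rfl⟩
  rw [← hN] at hNK
  have hidx : (K.subgroupOf N).index = K.index := by
    change K.relIndex N = K.index
    rw [← Subgroup.relIndex_sup_right, hNK, Subgroup.relIndex_top_right]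
  have hcN : Nat.card (K.subgroupOf N) ∣ Nat.card K := by
    have : Nat.card (K.subgroupOf N) = Nat.card ((K.subgroupOf N).map N.subtype) :=
      (Nat.card_congr ((K.subgroupOf N).equivMapOfInjective _ N.subtype_injective).toEquiv)
    rw [this, Subgroup.subgroupOf_map_subtype]
    exact Subgroup.card_dvd_of_le inf_le_left
  have hcop2 : (Nat.card (K.subgroupOf N)).Coprime (K.subgroupOf N).index := by
    rw [hidx, ← hHi]
    exact hcop.coprime_dvd_left hcN
  obtain ⟨X0, hX0⟩ := Subgroup.exists_right_complement'_of_coprime hcop2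
  obtain ⟨X, hXdef⟩ : ∃ X : Subgroup G, X = X0.map N.subtype := ⟨_, rfl⟩
  have hXN : X ≤ N := by rw [hXdef]; exact Subgroup.map_subtype_le _
  have hXc : Nat.card X = K.index := by
    rw [← hidx, hX0.symm.index_eq_card, hXdef]
    exact (Nat.card_congr (X0.equivMapOfInjective _ N.subtype_injective).toEquiv).symm
  have hXK : ∀ x ∈ X, x ∈ K → x = 1 := by
    intro x hx hxK
    rw [hXdef] at hx
    obtain ⟨y, hy, rfl⟩ := hx
    have := Subgroup.disjoint_def.mp hX0.disjoint (x := y) hxK hy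
    rw [this]; rfl
  have hHK : ∀ x ∈ H, x ∈ K → x = 1 := by
    intro x hx hxK
    rcases (hK x).mp hxK with h | h
    · exact h
    · exact absurd (by simpa using hx) (h 1)
  obtain ⟨e⟩ := frob_iso K H X hHK hXK hHi hXc
  apply frob_transfer e
  have : Nontrivial H := (Subgroup.nontrivial_iff_ne_bot H).mpr hne
  have : Nontrivial X := e.toEquiv.nontrivial
  obtain ⟨Z, hZ⟩ : ∃ Z : Subgroup G, Z = R' ⊓ Subgroup.centralizer (R' : Set G) := ⟨_, rfl⟩
  have hZc : ∀ a b : Z, a * b = b * a := by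
    rintro ⟨a, ha⟩ ⟨b, hb⟩
    rw [hZ] at ha hb
    exact Subtype.ext (Subgroup.mem_centralizer_iff.mp hb.2 a ha.1)
  let _ : CommGroup Z := { (inferInstance : Group Z) with mul_comm := hZc }
  have hZK : Z ≤ K := by rw [hZ]; exact inf_le_left.trans hR'K
  have : Nontrivial R' := (Subgroup.nontrivial_iff_ne_bot R').mpr hR'ne
  have hZnt : Nontrivial Z := by
    have := hR'p.center_nontrivial
    obtain ⟨⟨⟨z, hzR⟩, hz⟩, hz1⟩ := exists_ne (1 : Subgroup.center R')
    refine ⟨⟨⟨z, ?_⟩, 1, ?_⟩⟩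
    · rw [hZ]
      refine ⟨hzR, Subgroup.mem_centralizer_iff.mpr fun g hg => ?_⟩
      exact congrArg Subtype.val (Subgroup.mem_center_iff.mp hz ⟨g, hg⟩)
    · intro h
      apply hz1
      have : z = 1 := congrArg Subtype.val h
      subst this
      rfl
  have hconj : ∀ x ∈ N, ∀ z ∈ Z, x * z * x⁻¹ ∈ Z := by
    intro x hx z hz
    rw [hZ] at hz ⊢
    rw [hN] at hx
    refine ⟨(Subgroup.mem_normalizer_iff.mp hx z).mp hz.1, ?_⟩
    refine Subgroup.mem_centralizer_iff.mpr fun g hg => ?_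
    have h1 : x⁻¹ * g * x ∈ R' := by
      rw [Subgroup.mem_normalizer_iff.mp hx]
      simpa [mul_assoc] using hg
    have h2 := Subgroup.mem_centralizer_iff.mp hz.2 _ h1
    have h3 : x * (x⁻¹ * g * x * z) * x⁻¹ = x * (z * (x⁻¹ * g * x)) * x⁻¹ := by rw [h2]
    simpa [mul_assoc] using h3
  have hXnorm : X ≤ Subgroup.normalizer (Z : Set G) := by
    intro x hx
    rw [Subgroup.mem_normalizer_iff]
    intro z
    refine ⟨hconj x (hXN hx) z, fun h => ?_⟩
    have := hconj x⁻¹ (N.inv_mem (hXN hx)) _ h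
    simpa [mul_assoc] using this
  let φ : X →* MulAut Z := Z.normalizerMonoidHom.comp (Subgroup.inclusion hXnorm)
  refine frob_abstract φ ?_
  rintro ⟨x, hx⟩ ⟨z, hz⟩ hfix
  by_cases hx1 : x = 1
  · left; exact Subtype.ext hx1
  right
  apply Subtype.ext
  change z = 1
  have hfix' : x * z * x⁻¹ = z := congrArg Subtype.val hfix
  have hxz : x * z = z * x := mul_inv_eq_iff_eq_mul.mp hfix'
  have hxK : x ∉ K := fun h => hx1 (hXK x hx h)
  rw [hK] at hxK
  push Not at hxK
  obtain ⟨-, y, hy⟩ := hxK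
  have hzH : y * z * y⁻¹ ∈ H := by
    by_contra hcon
    have h1 := hfrob _ hcon (y * x * y⁻¹) hy (by
      have : y * z * y⁻¹ * (y * x * y⁻¹) * (y * z * y⁻¹)⁻¹ = y * (z * x) * z⁻¹ * y⁻¹ := by group
      rw [this, ← hxz]
      simpa [mul_assoc] using hy)
    apply hx1
    simpa using h1
  have := hHK _ hzH (hKn.conj_mem z (hZK hz) y)
  simpa using this

/-- Every Frobenius complement has non-trivial center; moreover a Frobenius
complement of even order contains a unique involution, which is central in it. -/
theorem frobenius_complement_center_nontrivial
    (G : Type*) [Group G] [Finite G] (H : Subgroup G)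
    (hne : H ≠ ⊥) (hpr : H ≠ ⊤)
    (hfrob : ∀ g : G, g ∉ H → ∀ x ∈ H, g * x * g⁻¹ ∈ H → x = 1) :
    (∃ z ∈ H, z ≠ 1 ∧ ∀ h ∈ H, z * h = h * z) ∧
    (2 ∣ Nat.card H →
      ∃ z : G, (z ∈ H ∧ z ≠ 1 ∧ z * z = 1 ∧ ∀ h ∈ H, z * h = h * z) ∧
        ∀ w : G, w ∈ H → w ≠ 1 → w * w = 1 → w = z) := by
  obtain ⟨⟨z, hz1, hz⟩, h2⟩ := frob_main H hne hpr hfrob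
  refine ⟨⟨z, z.2, by simpa using hz1, fun h hh => congrArg Subtype.val (hz ⟨h, hh⟩)⟩,
    fun hc => ?_⟩
  obtain ⟨t, ⟨ht1, htt, ht⟩, hu⟩ := h2 hc
  refine ⟨t, ⟨t.2, by simpa using ht1, congrArg Subtype.val htt,
    fun h hh => congrArg Subtype.val (ht ⟨h, hh⟩)⟩, fun w hw hw1 hww => ?_⟩
  exact congrArg Subtype.val (hu ⟨w, hw⟩ (fun h => hw1 (congrArg Subtype.val h))
    (Subtype.ext hww))
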